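/- Let A, B be complementary direct factors of ℕ+ (every n has a unique factorization n = a·b with a ∈ A, b ∈ B), with λ = (Σ_{a ∈ A} 1/a)^{-1} ∈ (0,1]. Let f : ℕ+ → ℝ satisfy Σ_{a ∈ A} min(f(a),0)/a > -∞, and define f(n;A) = f(a) where n = a·b, a ∈ A, b ∈ B. Then t^{-1} Σ_{n ≤ t} f(n;A) → λ · Σ_{a ∈ A} f(a)/a as t → ∞ (the limit may be +∞). -/

import Mathlib

structure IsDF (A B : Set ℕ) : Prop where
  apos : ∀ a ∈ A, 0 < a
  bpos : ∀ b ∈ B, 0 < b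
  fac : ∀ n : ℕ, 0 < n → ∃! p : ℕ × ℕ, p.1 ∈ A ∧ p.2 ∈ B ∧ p.1 * p.2 = n

theorem IsDF.inj {A B : Set ℕ} (h : IsDF A B) {a b a' b' : ℕ} (ha : a ∈ A) (hb : b ∈ B)
    (ha' : a' ∈ A) (hb' : b' ∈ B) (e : a * b = a' * b') : a = a' ∧ b = b' := by
  have := (h.fac (a' * b') (Nat.mul_pos (h.apos _ ha') (h.bpos _ hb'))).unique
    (y₁ := (a, b)) (y₂ := (a', b')) ⟨ha, hb, e⟩ ⟨ha', hb', rfl⟩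
  simpa using this

theorem IsDF.one_mem {A B : Set ℕ} (h : IsDF A B) : 1 ∈ A ∧ 1 ∈ B := by
  obtain ⟨⟨a, b⟩, ⟨ha, hb, e⟩, -⟩ := h.fac 1 one_pos
  simp only [mul_eq_one] at e ha hb
  obtain ⟨rfl, rfl⟩ := e
  exact ⟨ha, hb⟩

/-- the multiplication bijection on smooth numbers -/
theorem IsDF.bij {A B : Set ℕ} (h : IsDF A B) (N : ℕ) :
    ∃ e : ((A ∩ N.smoothNumbers : Set ℕ) × (B ∩ N.smoothNumbers : Set ℕ)) ≃ N.smoothNumbers,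
      ∀ x, (e x : ℕ) = x.1 * x.2 := by
  refine ⟨Equiv.ofBijective (fun x => ⟨x.1 * x.2,
    Nat.mul_mem_smoothNumbers x.1.2.2 x.2.2.2⟩) ⟨?_, ?_⟩, fun x => rfl⟩
  · rintro ⟨⟨a, ha, _⟩, ⟨b, hb, _⟩⟩ ⟨⟨a', ha', _⟩, ⟨b', hb', _⟩⟩ e
    have := h.inj ha hb ha' hb' (by simpa using e)
    simp [this.1, this.2]
  · rintro ⟨n, hn⟩
    obtain ⟨⟨a, b⟩, ⟨ha, hb, e⟩, -⟩ := h.fac n (Nat.pos_of_ne_zero hn.1)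
    simp only at e ha hb
    refine ⟨⟨⟨a, ha, Nat.mem_smoothNumbers_of_dvd hn ⟨b, e.symm⟩⟩,
      ⟨b, hb, Nat.mem_smoothNumbers_of_dvd hn ⟨a, by rw [← e, mul_comm]⟩⟩⟩, ?_⟩
    simp [e]

theorem summable_inter {F : Type*} [NormedField F] {f : ℕ → F} {S C : Set ℕ}
    (hs : Summable fun m : S => ‖f m‖) : Summable fun m : (C ∩ S : Set ℕ) => ‖f m‖ :=
  hs.comp_injective (i := fun m : (C ∩ S : Set ℕ) => (⟨m, m.2.2⟩ : S))
    (fun x y e => Subtype.ext (by simpa using e))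

theorem IsDF.prod_smooth {F : Type*} [NormedField F] [CompleteSpace F] {A B : Set ℕ}
    (h : IsDF A B) (N : ℕ) (f : ℕ →* F) (hf : ∀ {p : ℕ}, p.Prime → ‖f p‖ < 1) :
    (∑' a : (A ∩ N.smoothNumbers : Set ℕ), f a) * (∑' b : (B ∩ N.smoothNumbers : Set ℕ), f b)
      = ∑' n : N.smoothNumbers, f n := by
  obtain ⟨e, he⟩ := h.bij N
  have hs : Summable fun m : N.smoothNumbers => ‖f m‖ :=
    (EulerProduct.summable_and_hasSum_smoothNumbers_prod_primesBelow_geometric hf N).1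
  have hA : Summable fun m : (A ∩ N.smoothNumbers : Set ℕ) => ‖f m‖ :=
    summable_inter (f := fun n => f n) hs
  have hB : Summable fun m : (B ∩ N.smoothNumbers : Set ℕ) => ‖f m‖ :=
    summable_inter (f := fun n => f n) hs
  have h1 := tsum_mul_tsum_of_summable_norm hA hB
  have h2 := e.tsum_eq (fun n : N.smoothNumbers => f n)
  refine h1.trans (Eq.trans (tsum_congr fun x => ?_) h2)
  rw [he x, map_mul]

theorem IsDF.smooth_ne {F : Type*} [NormedField F] [CompleteSpace F] {A B : Set ℕ}
    (h : IsDF A B) (N : ℕ) (f : ℕ →* F) (hf : ∀ {p : ℕ}, p.Prime → ‖f p‖ < 1) :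
    (∑' a : (A ∩ N.smoothNumbers : Set ℕ), f a) ≠ 0 := by
  obtain ⟨-, hs⟩ := EulerProduct.summable_and_hasSum_smoothNumbers_prod_primesBelow_geometric hf N
  have := h.prod_smooth N f hf
  rw [hs.tsum_eq] at this
  intro h0
  rw [h0, zero_mul] at this
  have := Finset.prod_eq_zero_iff.1 this.symm
  obtain ⟨p, hp, e⟩ := this
  have hp := hf (Nat.prime_of_mem_primesBelow hp)
  rw [inv_eq_zero, sub_eq_zero] at e
  rw [← e] at hp
  simp at hp

/-- the function `1/n` -/
noncomputable def invHom : ℕ →* ℝ where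
  toFun n := ((n : ℝ))⁻¹
  map_one' := by simp
  map_mul' := by intro a b; simp [mul_comm]

theorem invHom_lt {p : ℕ} (hp : p.Prime) : ‖invHom p‖ < 1 := by
  have : (1 : ℝ) < p := by exact_mod_cast hp.one_lt
  simp only [invHom, MonoidHom.coe_mk, OneHom.coe_mk, norm_inv, RCLike.norm_natCast]
  exact inv_lt_one_of_one_lt₀ this

/-- The key bound on multiples of `d` in `A`. -/
theorem IsDF.key {A B : Set ℕ} (h : IsDF A B) (hsum : Summable fun a : A => ((a : ℕ) : ℝ)⁻¹)
    (d : ℕ) (F : Finset ℕ) (hF : ∀ a ∈ F, a ∈ A ∧ d ∣ a) :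
    ∑ a ∈ F, (a : ℝ)⁻¹ ≤ (d : ℝ)⁻¹ * ∑' a : A, ((a : ℕ) : ℝ)⁻¹ := by
  classical
  rcases F.eq_empty_or_nonempty with rfl | ⟨a0, ha0⟩
  · simp only [Finset.sum_empty]; positivity
  have hd : 0 < d := Nat.pos_of_dvd_of_pos (hF a0 ha0).2 (h.apos _ (hF a0 ha0).1)
  set N := F.sup id + 1 with hN
  have hFN : ∀ a ∈ F, a < N := fun a ha => Nat.lt_succ_of_le (Finset.le_sup (f := id) ha)
  obtain ⟨hs, -⟩ := EulerProduct.summable_and_hasSum_smoothNumbers_prod_primesBelow_geometric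
    (f := invHom) invHom_lt N
  have hs' : Summable fun n : N.smoothNumbers => ((n : ℕ) : ℝ)⁻¹ := by
    refine hs.congr fun n => ?_
    simp [invHom]
  have hsB : Summable fun n : (B ∩ N.smoothNumbers : Set ℕ) => ((n : ℕ) : ℝ)⁻¹ := by
    refine (summable_inter (C := B) hs).congr fun n => ?_
    simp [invHom]
  have hprod := h.prod_smooth N invHom invHom_lt
  simp only [invHom, MonoidHom.coe_mk, OneHom.coe_mk] at hprod
  set SB := ∑' n : (B ∩ N.smoothNumbers : Set ℕ), ((n : ℕ) : ℝ)⁻¹ with hSB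
  have hSBpos : 0 < SB := by
    refine hsB.tsum_pos (fun n => by positivity)
      ⟨1, h.one_mem.2, Nat.mem_smoothNumbers_of_lt one_pos ?_⟩ (by simp)
    have := hFN a0 ha0
    have := h.apos _ (hF a0 ha0).1
    omega
  have hle : (∑ a ∈ F, (d : ℝ) * (a : ℝ)⁻¹) * SB ≤ ∑' n : N.smoothNumbers, ((n : ℕ) : ℝ)⁻¹ := by
    have e1 : (∑ a ∈ F, (d : ℝ) * (a : ℝ)⁻¹) = ∑' a : F, (d : ℝ) * ((a : ℕ) : ℝ)⁻¹ := by
      rw [tsum_fintype, ← Finset.sum_coe_sort]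
    rw [e1, tsum_mul_tsum_of_summable_norm]
    · let i : F × (B ∩ N.smoothNumbers : Set ℕ) → N.smoothNumbers := fun x =>
        ⟨(x.1 / d) * x.2, Nat.mul_mem_smoothNumbers
          (Nat.mem_smoothNumbers_of_dvd
            (Nat.mem_smoothNumbers_of_lt (h.apos _ (hF _ x.1.2).1) (hFN _ x.1.2))
            (Nat.div_dvd_of_dvd (hF _ x.1.2).2)) x.2.2.2⟩
      have hi : Function.Injective i := by
        rintro ⟨⟨a, ha⟩, ⟨b, hb, _⟩⟩ ⟨⟨a', ha'⟩, ⟨b', hb', _⟩⟩ e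
        have e2 : (a / d) * b = (a' / d) * b' := by simpa [i] using e
        have e3 : a * b = a' * b' := by
          rw [← Nat.mul_div_cancel' (hF a ha).2, ← Nat.mul_div_cancel' (hF a' ha').2,
            mul_assoc, e2, mul_assoc]
        have := h.inj (hF a ha).1 hb (hF a' ha').1 hb' e3
        simp [this.1, this.2]
      refine le_trans (le_of_eq ?_) (tsum_comp_le_tsum_of_inj hs' (fun n => by positivity) hi)
      refine tsum_congr fun x => ?_
      simp only [i, Function.comp]
      rw [Nat.cast_mul, Nat.cast_div (hF _ x.1.2).2 (by positivity), mul_inv, inv_div,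
        div_eq_mul_inv]
    · exact Summable.of_finite
    · simpa using hsB
  rw [← hprod] at hle
  have h2 := le_of_mul_le_mul_right hle hSBpos
  have h3 : ∑' a : (A ∩ N.smoothNumbers : Set ℕ), ((a : ℕ) : ℝ)⁻¹ ≤ ∑' a : A, ((a : ℕ) : ℝ)⁻¹ :=
    tsum_comp_le_tsum_of_inj hsum (fun n => by positivity)
      (i := fun a : (A ∩ N.smoothNumbers : Set ℕ) => (⟨a, a.2.1⟩ : A))
      (fun x y e => Subtype.ext (by simpa using e))
  rw [← Finset.mul_sum] at h2
  rw [inv_mul_eq_div, le_div_iff₀ (by positivity), mul_comm]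
  exact h2.trans h3

/-- Summability with weights. -/
theorem IsDF.summable_weight {A B : Set ℕ} (h : IsDF A B)
    (hsum : Summable fun a : A => ((a : ℕ) : ℝ)⁻¹) {p : ℕ} (hp : p.Prime) :
    Summable fun a : A => (3 / 2 : ℝ) ^ ((a : ℕ).factorization p) * ((a : ℕ) : ℝ)⁻¹ := by
  classical
  have hp2 : (2 : ℝ) ≤ p := by exact_mod_cast hp.two_le
  set H := ∑' a : A, ((a : ℕ) : ℝ)⁻¹ with hH
  have hH0 : 0 ≤ H := by positivity
  have hgeo : Summable fun k : ℕ => (3 / 2 / p : ℝ) ^ k :=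
    summable_geometric_of_lt_one (by positivity) (by rw [div_lt_one (by positivity)]; linarith)
  refine summable_of_sum_le (c := (∑' k : ℕ, (3 / 2 / p : ℝ) ^ k) * H)
    (fun a => by positivity) fun u => ?_
  set F : Finset ℕ := u.map (Function.Embedding.subtype _) with hFdef
  have hFA : ∀ a ∈ F, a ∈ A := by
    intro a ha
    simp only [hFdef, Finset.mem_map, Function.Embedding.subtype_apply] at ha
    obtain ⟨x, -, rfl⟩ := ha
    exact x.2
  have e0 : ∑ a ∈ u, (3 / 2 : ℝ) ^ ((a : ℕ).factorization p) * ((a : ℕ) : ℝ)⁻¹ =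
    ∑ a ∈ F, (3 / 2 : ℝ) ^ (a.factorization p) * (a : ℝ)⁻¹ := by
    rw [hFdef, Finset.sum_map]; rfl
  rw [e0]
  set K := F.sup (fun a => a.factorization p) + 1 with hK
  calc ∑ a ∈ F, (3 / 2 : ℝ) ^ (a.factorization p) * (a : ℝ)⁻¹
      ≤ ∑ a ∈ F, ∑ k ∈ Finset.range K, if p ^ k ∣ a then (3 / 2 : ℝ) ^ k * (a : ℝ)⁻¹ else 0 := by
        refine Finset.sum_le_sum fun a ha => ?_
        have hm : a.factorization p ∈ Finset.range K := by
          rw [Finset.mem_range]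
          exact Nat.lt_succ_of_le (Finset.le_sup (f := fun a => a.factorization p) ha)
        refine le_trans (le_of_eq ?_) (Finset.single_le_sum
          (f := fun k => if p ^ k ∣ a then (3 / 2 : ℝ) ^ k * (a : ℝ)⁻¹ else 0) (fun k _ => ?_) hm)
        · rw [if_pos (Nat.ordProj_dvd a p)]
        · split_ifs <;> positivity
    _ = ∑ k ∈ Finset.range K, (3 / 2 : ℝ) ^ k * ∑ a ∈ F with p ^ k ∣ a, (a : ℝ)⁻¹ := by
        rw [Finset.sum_comm]
        refine Finset.sum_congr rfl fun k _ => ?_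
        rw [Finset.mul_sum, Finset.sum_filter]
    _ ≤ ∑ k ∈ Finset.range K, (3 / 2 : ℝ) ^ k * (((p ^ k : ℕ) : ℝ)⁻¹ * H) := by
        refine Finset.sum_le_sum fun k _ => ?_
        gcongr
        refine h.key hsum (p ^ k) _ fun a ha => ?_
        rw [Finset.mem_filter] at ha
        exact ⟨hFA a ha.1, ha.2⟩
    _ = (∑ k ∈ Finset.range K, (3 / 2 / p : ℝ) ^ k) * H := by
        rw [Finset.sum_mul]
        refine Finset.sum_congr rfl fun k _ => ?_
        rw [div_pow (3 / 2 : ℝ) (p : ℝ) k]; push_cast; ring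
    _ ≤ _ := by
        gcongr
        exact hgeo.sum_le_tsum _ (fun k _ => by positivity)

open Filter Topology in
theorem hurwitz_like {R : ℝ} {Φ : ℂ → ℂ} {Ψ : ℕ → ℂ → ℂ} {τ : ℕ → ℝ} {z0 : ℂ}
    (hz0 : z0 ∈ Metric.ball (0 : ℂ) R) (hΦ : DifferentiableOn ℂ Φ (Metric.ball 0 R))
    (hΨ : ∀ N, DifferentiableOn ℂ (Ψ N) (Metric.ball 0 R))
    (hne : ∀ N, ∀ z ∈ Metric.ball (0 : ℂ) R, Ψ N z ≠ 0)
    (hd : ∀ N, ∀ z ∈ Metric.ball (0 : ℂ) R, ‖Φ z - Ψ N z‖ ≤ τ N)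
    (hτ : Tendsto τ atTop (𝓝 0)) (h0 : Φ z0 = 0) : ∀ z ∈ Metric.ball (0 : ℂ) R, Φ z = 0 := by
  have han : AnalyticOnNhd ℂ Φ (Metric.ball 0 R) := hΦ.analyticOnNhd Metric.isOpen_ball
  by_contra hcon
  have hnf : ¬ ∃ᶠ z in 𝓝[≠] z0, Φ z = 0 := fun hfr => hcon fun z hz =>
    han.eqOn_zero_of_preconnected_of_frequently_eq_zero
      (convex_ball (0 : ℂ) R).isPreconnected hz0 hfr hz
  rw [not_frequently, eventually_nhdsWithin_iff, Metric.eventually_nhds_iff_ball] at hnf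
  obtain ⟨ε, hε, hne0⟩ := hnf
  obtain ⟨ε', hε', hsub⟩ := Metric.isOpen_iff.1 (Metric.isOpen_ball) z0 hz0
  set r := min ε ε' / 2 with hr
  have hr0 : 0 < r := by positivity
  have hrε : r < ε := by
    have := min_le_left ε ε'
    have : 0 < min ε ε' := by positivity
    linarith
  have hrε' : r < ε' := by
    have := min_le_right ε ε'
    have : 0 < min ε ε' := by positivity
    linarith
  have hcl : Metric.closedBall z0 r ⊆ Metric.ball 0 R :=
    (Metric.closedBall_subset_ball hrε').trans hsub
  have hsph : Metric.sphere z0 r ⊆ Metric.ball 0 R := Metric.sphere_subset_closedBall.trans hcl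
  obtain ⟨x, hx, hmin⟩ := (isCompact_sphere z0 r).exists_isMinOn
    (NormedSpace.sphere_nonempty.2 hr0.le) ((hΦ.continuousOn.mono hsph).norm)
  have hδ : 0 < ‖Φ x‖ := by
    rw [norm_pos_iff]
    refine hne0 x ?_ ?_
    · rw [Metric.mem_ball, Metric.mem_sphere.1 hx]; exact hrε
    · exact Metric.ne_of_mem_sphere hx hr0.ne'
  obtain ⟨N, hN⟩ := (hτ.eventually (gt_mem_nhds (half_pos hδ))).exists
  have hb : ∀ z ∈ frontier (Metric.ball z0 r), ‖(Ψ N z)⁻¹‖ ≤ (‖Φ x‖ / 2)⁻¹ := by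
    intro z hz
    have hz := Metric.frontier_ball_subset_sphere hz
    rw [norm_inv]
    refine inv_anti₀ (half_pos hδ) ?_
    have h1 : ‖Φ x‖ ≤ ‖Φ z‖ := hmin hz
    have h2 := hd N z (hsph hz)
    have h3 : ‖Φ z‖ ≤ ‖Φ z - Ψ N z‖ + ‖Ψ N z‖ := by
      simpa using norm_add_le (Φ z - Ψ N z) (Ψ N z)
    linarith
  have hdc : DiffContOnCl ℂ (fun z => (Ψ N z)⁻¹) (Metric.ball z0 r) := by
    apply DifferentiableOn.diffContOnCl
    rw [closure_ball z0 hr0.ne']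
    exact ((hΨ N).mono hcl).inv fun z hz => hne N z (hcl hz)
  have hm := Complex.norm_le_of_forall_mem_frontier_norm_le Metric.isBounded_ball hdc hb
    (subset_closure (Metric.mem_ball_self hr0))
  rw [norm_inv] at hm
  have h1 := (inv_le_inv₀ (norm_pos_iff.2 (hne N z0 hz0)) (half_pos hδ)).1 hm
  have h2 := hd N z0 hz0
  rw [h0, zero_sub, norm_neg] at h2
  linarith

/-- replace the value at `p` of a completely multiplicative function by `w` -/
noncomputable def tw (f : ℕ →* ℂ) (p : ℕ) (w : ℂ) : ℕ →* ℂ where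
  toFun n := if n = 0 then 0 else w ^ (n.factorization p) * f (n / p ^ n.factorization p)
  map_one' := by simp
  map_mul' := by
    intro a b
    by_cases ha : a = 0
    · simp [ha]
    by_cases hb : b = 0
    · simp [hb]
    rw [if_neg (mul_ne_zero ha hb), if_neg ha, if_neg hb, Nat.ordCompl_mul, map_mul,
      Nat.factorization_mul ha hb]
    simp only [Finsupp.coe_add, Pi.add_apply, pow_add]
    ring

theorem tw_apply (f : ℕ →* ℂ) (p : ℕ) (w : ℂ) {n : ℕ} (hn : n ≠ 0) :
    tw f p w n = w ^ (n.factorization p) * f (n / p ^ n.factorization p) := by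
  simp [tw, hn]

theorem tw_self (f : ℕ →* ℂ) (p : ℕ) {n : ℕ} (hn : n ≠ 0) : tw f p (f p) n = f n := by
  rw [tw_apply f p _ hn, ← map_pow, ← map_mul, Nat.ordProj_mul_ordCompl_eq_self]

theorem tw_zero_of_dvd (f : ℕ →* ℂ) {p : ℕ} (hp : p.Prime) {n : ℕ} (hn : n ≠ 0) (hd : p ∣ n) :
    tw f p 0 n = 0 := by
  rw [tw_apply f p _ hn, zero_pow, zero_mul]
  exact (hp.factorization_pos_of_dvd hn hd).ne'

theorem tw_of_not_dvd (f : ℕ →* ℂ) {p : ℕ} (w : ℂ) {n : ℕ} (hn : n ≠ 0)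
    (hd : ¬ p ∣ n) : tw f p w n = f n := by
  rw [tw_apply f p _ hn, Nat.factorization_eq_zero_of_not_dvd hd]
  simp

theorem tw_norm_le (f : ℕ →* ℂ) (hf : ∀ n : ℕ, 0 < n → ‖f n‖ ≤ (n : ℝ)⁻¹) {p : ℕ} (hp : p.Prime)
    {w : ℂ} (hw : ‖w‖ ≤ 3 / 2 / p) {n : ℕ} (hn : 0 < n) :
    ‖tw f p w n‖ ≤ (3 / 2 : ℝ) ^ (n.factorization p) * (n : ℝ)⁻¹ := by
  rw [tw_apply f p _ hn.ne', norm_mul, norm_pow]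
  have h1 := hf _ (Nat.ordCompl_pos p hn.ne')
  have hp0 : (0 : ℝ) < p := by exact_mod_cast hp.pos
  rw [Nat.cast_div (Nat.ordProj_dvd n p) (by push_cast; positivity)] at h1
  calc ‖w‖ ^ n.factorization p * ‖f (n / p ^ n.factorization p)‖
      ≤ (3 / 2 / p) ^ n.factorization p * ((n : ℝ) / ((p ^ n.factorization p : ℕ) : ℝ))⁻¹ := by
        gcongr
    _ = _ := by
        rw [div_pow (3 / 2 : ℝ) (p : ℝ), inv_div]; push_cast
        field_simp

open Filter Topology in
theorem tail_tendsto {A : Set ℕ} {u : A → ℝ} (hu : Summable u)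
    (hu0 : ∀ a, 0 ≤ u a) :
    Tendsto (fun N : ℕ => ∑' a : A, (if (a : ℕ) < N then 0 else u a)) atTop (𝓝 0) := by
  have : Tendsto (fun N : ℕ => ∑' a : A, (if (a : ℕ) < N then 0 else u a)) atTop
      (𝓝 (∑' a : A, (0 : ℝ))) := by
    refine tendsto_tsum_of_dominated_convergence hu (fun a => ?_) (Eventually.of_forall
      fun N a => ?_)
    · refine tendsto_const_nhds.congr' ?_
      filter_upwards [eventually_gt_atTop (a : ℕ)] with N hN
      rw [if_pos hN]
    · split_ifs
      · simpa using hu0 a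
      · rw [Real.norm_of_nonneg (hu0 a)]
  simpa using this

open Filter Topology in
theorem IsDF.step {A B : Set ℕ} (h : IsDF A B) (hsum : Summable fun a : A => ((a : ℕ) : ℝ)⁻¹)
    (f : ℕ →* ℂ) (hf : ∀ n : ℕ, 0 < n → ‖f n‖ ≤ (n : ℝ)⁻¹) {p : ℕ} (hp : p.Prime)
    (h0 : ∑' a : A, f a = 0) : ∑' a : A, tw f p 0 a = 0 := by
  classical
  have hp2 : (2 : ℝ) ≤ p := by exact_mod_cast hp.two_le
  set R : ℝ := 3 / 2 / p with hR
  have hR0 : 0 < R := by positivity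
  have hR1 : R < 1 := by rw [hR, div_lt_one (by positivity)]; linarith
  set u : A → ℝ := fun a => (3 / 2 : ℝ) ^ ((a : ℕ).factorization p) * ((a : ℕ) : ℝ)⁻¹ with hu
  have hus : Summable u := h.summable_weight hsum hp
  have hu0 : ∀ a, 0 ≤ u a := fun a => by positivity
  have hbd : ∀ a : A, ∀ w ∈ Metric.ball (0 : ℂ) R, ‖tw f p w a‖ ≤ u a := fun a w hw =>
    tw_norm_le f hf hp (by simpa using (mem_ball_zero_iff.1 hw).le) (h.apos _ a.2)
  have hdiff : ∀ a : A, DifferentiableOn ℂ (fun w => tw f p w a) (Metric.ball 0 R) := by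
    intro a
    have : (fun w => tw f p w a) = fun w => w ^ ((a : ℕ).factorization p) *
        f (a / p ^ (a : ℕ).factorization p) := by
      funext w; exact tw_apply f p w (h.apos _ a.2).ne'
    rw [this]
    fun_prop
  have key := hurwitz_like (R := R) (z0 := f p) (Φ := fun w => ∑' a : A, tw f p w a)
    (Ψ := fun N w => ∑' a : A, if (a : ℕ) ∈ N.smoothNumbers then tw f p w a else 0)
    (τ := fun N => ∑' a : A, (if (a : ℕ) < N then 0 else u a))
    ?_ ?_ ?_ ?_ ?_ ?_ ?_
  · simpa using key 0 (Metric.mem_ball_self hR0)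
  · rw [mem_ball_zero_iff]
    refine (hf p hp.pos).trans_lt ?_
    rw [hR, inv_eq_one_div]
    gcongr
    norm_num
  · exact Complex.differentiableOn_tsum_of_summable_norm hus hdiff Metric.isOpen_ball hbd
  · intro N
    refine Complex.differentiableOn_tsum_of_summable_norm hus ?_ Metric.isOpen_ball ?_
    · intro a
      split_ifs
      · exact hdiff a
      · exact differentiableOn_const 0
    · intro a w hw
      split_ifs
      · exact hbd a w hw
      · simpa using hu0 a
  · intro N w hw
    have hne := h.smooth_ne N (tw f p w) (by
      intro q hq
      by_cases hqp : q = p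
      · subst hqp
        have : tw f q w q = w := by
          rw [tw_apply f q w hq.ne_zero, hq.factorization_self]
          simp [Nat.div_self hq.pos]
        rw [this]
        exact (mem_ball_zero_iff.1 hw).trans hR1
      · rw [tw_of_not_dvd f w hq.ne_zero (fun hd => hqp ((Nat.prime_dvd_prime_iff_eq hp hq).1 hd).symm)]
        refine (hf q hq.pos).trans_lt (inv_lt_one_of_one_lt₀ ?_)
        exact_mod_cast hq.one_lt)
    convert hne using 1
    rw [tsum_subtype (A ∩ N.smoothNumbers) (fun n => tw f p w n),
      tsum_subtype A (fun n => if n ∈ N.smoothNumbers then tw f p w n else 0)]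
    refine tsum_congr fun n => ?_
    simp only [Set.indicator_apply, Set.mem_inter_iff]
    split_ifs <;> simp_all
  · intro N w hw
    have s1 : Summable fun a : A => tw f p w a := Summable.of_norm_bounded hus fun a => hbd a w hw
    have s2 : Summable fun a : A => if (a : ℕ) ∈ N.smoothNumbers then tw f p w a else 0 := by
      refine Summable.of_norm_bounded hus fun a => ?_
      split_ifs
      · exact hbd a w hw
      · simpa using hu0 a
    have s3 : Summable fun a : A => if (a : ℕ) < N then 0 else u a := by
      refine Summable.of_norm_bounded hus fun a => ?_
      split_ifs
      · simpa using hu0 a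
      · rw [Real.norm_of_nonneg (hu0 a)]
    rw [← s1.tsum_sub s2]
    refine tsum_of_norm_bounded s3.hasSum fun a => ?_
    by_cases haN : (a : ℕ) < N
    · rw [if_pos haN, if_pos (Nat.mem_smoothNumbers_of_lt (h.apos _ a.2) haN)]
      simp
    · rw [if_neg haN]
      split_ifs
      · simpa using hu0 a
      · simpa using hbd a w hw
  · exact tail_tendsto hus hu0
  · have : ∀ a : A, tw f p (f p) a = f a := fun a => tw_self f p (h.apos _ a.2).ne'
    simp only [this, h0]

theorem IsDF.iter {A B : Set ℕ} (h : IsDF A B) (hsum : Summable fun a : A => ((a : ℕ) : ℝ)⁻¹)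
    (f : ℕ →* ℂ) (hf : ∀ n : ℕ, 0 < n → ‖f n‖ ≤ (n : ℝ)⁻¹) (h0 : ∑' a : A, f a = 0) (N : ℕ) :
    ∃ g : ℕ →* ℂ, (∀ n : ℕ, 0 < n → ‖g n‖ ≤ (n : ℝ)⁻¹) ∧ ∑' a : A, g a = 0 ∧
      ∀ q < N, q.Prime → ∀ n : ℕ, 0 < n → q ∣ n → g n = 0 := by
  induction N with
  | zero => exact ⟨f, hf, h0, by simp⟩
  | succ N ih =>
    obtain ⟨g, hg, hg0, hgd⟩ := ih
    by_cases hN : N.Prime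
    · refine ⟨tw g N 0, ?_, h.step hsum g hg hN hg0, ?_⟩
      · intro n hn
        by_cases hd : N ∣ n
        · rw [tw_zero_of_dvd g hN hn.ne' hd]; simp
        · rw [tw_of_not_dvd g 0 hn.ne' hd]; exact hg n hn
      · intro q hq hqp n hn hd
        by_cases hd' : N ∣ n
        · exact tw_zero_of_dvd g hN hn.ne' hd'
        · rw [tw_of_not_dvd g 0 hn.ne' hd']
          refine hgd q ?_ hqp n hn hd
          have : q ≠ N := by rintro rfl; exact hd' hd
          omega
    · refine ⟨g, hg, hg0, fun q hq hqp => hgd q ?_ hqp⟩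
      have : q ≠ N := by rintro rfl; exact hN hqp
      omega

theorem IsDF.char_ne {A B : Set ℕ} (h : IsDF A B) (hsum : Summable fun a : A => ((a : ℕ) : ℝ)⁻¹)
    (f : ℕ →* ℂ) (hf : ∀ n : ℕ, 0 < n → ‖f n‖ ≤ (n : ℝ)⁻¹) : ∑' a : A, f a ≠ 0 := by
  classical
  intro h0
  have ht := tail_tendsto hsum (fun a => by positivity)
  obtain ⟨N, hN, hN2⟩ := ((ht.eventually (gt_mem_nhds (zero_lt_one' ℝ))).and
    (Filter.eventually_gt_atTop 1)).exists
  obtain ⟨g, hg, hg0, hgd⟩ := h.iter hsum f hf h0 N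
  have s1 : Summable fun a : A => g a :=
    Summable.of_norm_bounded hsum fun a => hg _ (h.apos _ a.2)
  have s3 : Summable fun a : A => if (a : ℕ) < N then (0 : ℝ) else ((a : ℕ) : ℝ)⁻¹ := by
    refine Summable.of_norm_bounded hsum fun a => ?_
    split_ifs
    · simp
    · rw [Real.norm_of_nonneg (by positivity)]
  have key : ‖∑' a : A, (g a - if (a : ℕ) = 1 then 1 else 0)‖ ≤
      ∑' a : A, if (a : ℕ) < N then (0 : ℝ) else ((a : ℕ) : ℝ)⁻¹ := by
    refine tsum_of_norm_bounded s3.hasSum fun a => ?_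
    have ha := h.apos _ a.2
    by_cases h1 : (a : ℕ) = 1
    · simp [h1, hN2]
    · by_cases haN : (a : ℕ) < N
      · have := hgd _ ((Nat.minFac_le ha).trans_lt haN) (Nat.minFac_prime h1) a ha
          (Nat.minFac_dvd _)
        simp [this, h1, haN]
      · simpa [h1, haN] using hg _ ha
  have e1 : ∑' a : A, (if (a : ℕ) = 1 then (1 : ℂ) else 0) = 1 := by
    rw [tsum_eq_single (⟨1, h.one_mem.1⟩ : A)]
    · simp
    · intro b hb
      rw [if_neg]
      intro e
      exact hb (Subtype.ext e)
  have s2 : Summable fun a : A => if (a : ℕ) = 1 then (1 : ℂ) else 0 := by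
    refine summable_of_ne_finset_zero (s := {(⟨1, h.one_mem.1⟩ : A)}) fun b hb => ?_
    rw [if_neg]
    intro e
    exact hb (by simpa using Subtype.ext e)
  rw [s1.tsum_sub s2, hg0, e1] at key
  simp only [zero_sub, norm_neg, norm_one] at key
  linarith
set_option linter.style.haveILetI false

open BoundedContinuousFunction in
/-- dilation operators -/
noncomputable def dil (n : ℕ) : (ℕ →ᵇ ℂ) →L[ℂ] (ℕ →ᵇ ℂ) :=
  LinearMap.mkContinuous
    { toFun := fun h => BoundedContinuousFunction.ofNormedAddCommGroupDiscrete
        (fun k => (n : ℂ)⁻¹ * h (n * k)) ((n : ℝ)⁻¹ * ‖h‖) (fun k => by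
          rw [norm_mul, norm_inv, RCLike.norm_natCast]
          gcongr
          exact h.norm_coe_le_norm _)
      map_add' := by intro x y; ext k; simp [mul_add]
      map_smul' := by intro c x; ext k; simp; ring }
    ((n : ℝ)⁻¹) (by
      intro h
      refine (BoundedContinuousFunction.norm_le (by positivity)).2 fun k => ?_
      simp only [LinearMap.coe_mk, AddHom.coe_mk,
        BoundedContinuousFunction.coe_ofNormedAddCommGroupDiscrete]
      rw [norm_mul, norm_inv, RCLike.norm_natCast]
      gcongr
      exact h.norm_coe_le_norm _)

open BoundedContinuousFunction in
theorem dil_apply (n : ℕ) (h : ℕ →ᵇ ℂ) (k : ℕ) : dil n h k = (n : ℂ)⁻¹ * h (n * k) := rfl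

theorem dil_norm (n : ℕ) : ‖dil n‖ ≤ (n : ℝ)⁻¹ :=
  LinearMap.mkContinuous_norm_le _ (by positivity) _

theorem dil_one : dil 1 = 1 := by
  ext h k
  simp [dil_apply]

theorem dil_mul (m n : ℕ) : dil (m * n) = dil m * dil n := by
  ext h k
  simp only [dil_apply, mul_apply_eq_comp]
  rw [show m * n * k = n * (m * k) by ring]
  push_cast
  rw [mul_inv]
  ring

theorem gelfand_unit {R : Type*} [NormedRing R] [NormedAlgebra ℂ R] [CompleteSpace R]
    [NormOneClass R] (C : Subalgebra ℂ R) (hC : IsClosed (C : Set R))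
    (hcomm : ∀ x y : C, x * y = y * x) (x : C)
    (hx : ∀ φ : C →ₐ[ℂ] ℂ, (∀ y, ‖φ y‖ ≤ ‖y‖) → φ x ≠ 0) : IsUnit x := by
  haveI : CompleteSpace C := hC.completeSpace_coe
  letI : NormedCommRing C := { (inferInstance : NormedRing C) with mul_comm := hcomm }
  by_contra hu
  obtain ⟨φ, hφ⟩ := WeakDual.CharacterSpace.exists_apply_eq_zero hu
  refine hx (WeakDual.CharacterSpace.toAlgHom φ) (fun y => ?_) hφ
  haveI : NormOneClass C := ⟨(norm_one : ‖(1 : R)‖ = 1)⟩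
  exact AlgHom.norm_apply_le_self (WeakDual.CharacterSpace.toAlgHom φ) y

theorem IsDF.exists_inv_aux {A B : Set ℕ} (h : IsDF A B)
    (hsum : Summable fun a : A => ((a : ℕ) : ℝ)⁻¹) {R : Type*} [NormedRing R] [NormedAlgebra ℂ R]
    [CompleteSpace R] [NormOneClass R] (D : ℕ → R) (D1 : D 1 = 1)
    (Dmul : ∀ m n, D (m * n) = D m * D n) (Dn : ∀ n, ‖D n‖ ≤ (n : ℝ)⁻¹) :
    ∃ X G : R, HasSum (fun a : A => D a) X ∧ G * X = 1 := by
  obtain ⟨C, hC, hcomm, hD⟩ : ∃ C : Subalgebra ℂ R, IsClosed (C : Set R) ∧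
      (∀ x y : C, x * y = y * x) ∧ ∀ n, D n ∈ C := by
    have hc : ∀ x ∈ Set.range D, ∀ y ∈ Set.range D, x * y = y * x := by
      rintro _ ⟨m, rfl⟩ _ ⟨n, rfl⟩
      rw [← Dmul, ← Dmul, mul_comm]
    have hcomm0 : ∀ x y : Algebra.adjoin ℂ (Set.range D), x * y = y * x := by
      intro x y
      haveI := Algebra.isMulCommutative_adjoin ℂ hc
      exact mul_comm' x y
    refine ⟨(Algebra.adjoin ℂ (Set.range D)).topologicalClosure,
      Subalgebra.isClosed_topologicalClosure _, ?_, fun n => Subalgebra.le_topologicalClosure _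
        (Algebra.subset_adjoin ⟨n, rfl⟩)⟩
    letI := Subalgebra.commRingTopologicalClosure (Algebra.adjoin ℂ (Set.range D)) hcomm0
    intro x y
    exact mul_comm x y
  haveI : CompleteSpace C := hC.completeSpace_coe
  let T : ℕ → C := fun n => ⟨D n, hD n⟩
  have hTn : ∀ n, ‖T n‖ ≤ (n : ℝ)⁻¹ := fun n => Dn n
  have hTs : Summable fun a : A => T a := Summable.of_norm_bounded hsum fun a => hTn a
  obtain ⟨u, hu⟩ := gelfand_unit C hC hcomm (∑' a : A, T a) (by
    intro φ hφ
    have hcont : Continuous φ :=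
      AddMonoidHomClass.continuous_of_bound φ 1 (by simpa using hφ)
    let f : ℕ →* ℂ :=
      { toFun := fun n => φ (T n)
        map_one' := by
          have : T 1 = 1 := Subtype.ext D1
          rw [this, map_one]
        map_mul' := by
          intro m n
          have : T (m * n) = T m * T n := Subtype.ext (Dmul m n)
          rw [this, map_mul] }
    have h1 := h.char_ne hsum f (fun n _ => (hφ _).trans (hTn n))
    have h2 := (hTs.hasSum.map φ hcont).tsum_eq
    rw [← h2]
    exact h1)
  refine ⟨((∑' a : A, T a : C) : R), ((↑u⁻¹ : C) : R), ?_, ?_⟩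
  · exact hTs.hasSum.map C.val continuous_subtype_val
  · rw [← hu]
    have : (↑u⁻¹ : C) * (u : C) = 1 := u.inv_mul
    exact congrArg Subtype.val this

open BoundedContinuousFunction in
theorem IsDF.exists_inv {A B : Set ℕ} (h : IsDF A B)
    (hsum : Summable fun a : A => ((a : ℕ) : ℝ)⁻¹) :
    ∃ X G : (ℕ →ᵇ ℂ) →L[ℂ] (ℕ →ᵇ ℂ), HasSum (fun a : A => dil a) X ∧ G * X = 1 := by
  haveI : Nontrivial (ℕ →ᵇ ℂ) := ⟨⟨const ℕ 1, const ℕ 0, fun e => by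
    have := congrArg (fun k : ℕ →ᵇ ℂ => k 0) e
    simp at this⟩⟩
  exact h.exists_inv_aux hsum dil dil_one dil_mul dil_norm

open BoundedContinuousFunction in
theorem IsDF.exists_g {A B : Set ℕ} (h : IsDF A B)
    (hsum : Summable fun a : A => ((a : ℕ) : ℝ)⁻¹) :
    ∃ g : ℕ → ℂ, Summable (fun n => ‖g n‖) ∧ ∀ n, 0 < n →
      HasSum (fun a : A => if (a : ℕ) ∣ n then ((a : ℕ) : ℂ)⁻¹ * g (n / a) else 0)
        (if n = 1 then 1 else 0) := by
  classical
  obtain ⟨X, G, hX, hG⟩ := h.exists_inv hsum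
  let δ : ℕ → (ℕ →ᵇ ℂ) := fun n => ofNormedAddCommGroupDiscrete
    (fun k => if k = n then 1 else 0) 1 (fun k => by split_ifs <;> simp)
  have hδ : ∀ n k, δ n k = if k = n then 1 else 0 := fun n k => rfl
  refine ⟨fun n => G (δ n) 1, ?_, ?_⟩
  · refine summable_of_sum_le (c := ‖G‖) (fun n => norm_nonneg _) fun F => ?_
    let c : ℕ → ℂ := fun n => (starRingEnd ℂ) (G (δ n) 1) / ‖G (δ n) 1‖
    have hc : ∀ n, c n * G (δ n) 1 = ‖G (δ n) 1‖ := by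
      intro n
      by_cases h0 : G (δ n) 1 = 0
      · simp [c, h0]
      · have : (‖G (δ n) 1‖ : ℂ) ≠ 0 := by simpa using h0
        simp only [c]
        rw [div_mul_eq_mul_div, mul_comm, Complex.mul_conj, Complex.normSq_eq_norm_sq]
        field_simp
        push_cast
        ring
    have hcn : ∀ n, ‖c n‖ ≤ 1 := by
      intro n
      simp only [c, norm_div, RCLike.norm_conj, Complex.norm_real, norm_norm]
      exact div_self_le_one _
    let k : ℕ →ᵇ ℂ := ∑ n ∈ F, c n • δ n
    have hk : ‖k‖ ≤ 1 := by
      refine (norm_le zero_le_one).2 fun j => ?_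
      have : k j = if j ∈ F then c j else 0 := by
        simp [k, hδ]
      rw [this]
      split_ifs
      · exact hcn j
      · simp
    have e : ((∑ n ∈ F, ‖G (δ n) 1‖ : ℝ) : ℂ) = G k 1 := by
      simp only [k, map_sum, map_smul]
      push_cast
      rw [BoundedContinuousFunction.coe_sum, Finset.sum_apply]
      refine Finset.sum_congr rfl fun n _ => ?_
      rw [← hc n]
      simp
    have e2 : ∑ n ∈ F, ‖G (δ n) 1‖ = ‖G k 1‖ := by
      rw [← e, Complex.norm_real, Real.norm_of_nonneg (Finset.sum_nonneg fun _ _ => norm_nonneg _)]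
    rw [e2]
    calc ‖G k 1‖ ≤ ‖G k‖ := norm_coe_le_norm _ _
      _ ≤ ‖G‖ * ‖k‖ := G.le_opNorm _
      _ ≤ ‖G‖ * 1 := by gcongr
      _ = ‖G‖ := mul_one _
  · intro n hn
    have h1 : HasSum (fun a : A => dil a (δ n)) (X (δ n)) :=
      hX.map (ContinuousLinearMap.apply ℂ (ℕ →ᵇ ℂ) (δ n)) (ContinuousLinearMap.continuous _)
    have h2 : HasSum (fun a : A => G (dil a (δ n))) (G (X (δ n))) := h1.map G G.continuous
    have h3 : HasSum (fun a : A => G (dil a (δ n)) 1) (G (X (δ n)) 1) :=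
      h2.map (BoundedContinuousFunction.evalCLM ℂ 1) (ContinuousLinearMap.continuous _)
    have e1 : G (X (δ n)) 1 = if n = 1 then 1 else 0 := by
      have : G (X (δ n)) = δ n := by
        have := congrArg (fun Y => Y (δ n)) hG
        simpa using this
      rw [this, hδ]
      simp only [eq_comm]
    rw [e1] at h3
    convert h3 using 2 with a
    have ha := h.apos _ a.2
    split_ifs with hd
    · have : dil a (δ n) = ((a : ℕ) : ℂ)⁻¹ • δ (n / a) := by
        ext k
        rw [dil_apply, hδ]
        simp only [BoundedContinuousFunction.coe_smul, smul_eq_mul, hδ]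
        congr 1
        have : (a : ℕ) * k = n ↔ k = n / a := by
          constructor
          · rintro rfl; exact (Nat.mul_div_cancel_left k ha).symm
          · rintro rfl; exact Nat.mul_div_cancel' hd
        simp [this]
      rw [this]
      simp
    · have : dil a (δ n) = 0 := by
        ext k
        rw [dil_apply, hδ, if_neg]
        · simp
        · rintro rfl; exact hd ⟨k, rfl⟩
      rw [this]
      simp

open Classical in
/-- counting function of `B` -/
noncomputable def cntB (B : Set ℕ) (N : ℕ) : ℝ := ∑ n ∈ Finset.Ioc 0 N, if n ∈ B then 1 else 0

theorem cntB_nonneg (B : Set ℕ) (N : ℕ) : 0 ≤ cntB B N :=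
  Finset.sum_nonneg fun n _ => by split_ifs <;> simp

theorem cntB_le (B : Set ℕ) (N : ℕ) : cntB B N ≤ N := by
  classical
  unfold cntB
  calc _ ≤ ∑ n ∈ Finset.Ioc 0 N, (1 : ℝ) := Finset.sum_le_sum fun n _ => by split_ifs <;> simp
    _ = N := by simp

open Filter Topology in
theorem nat_div_tendsto {d : ℕ} : Tendsto (fun N : ℕ => ((N / d : ℕ) : ℝ) / N) atTop
    (𝓝 ((d : ℝ)⁻¹)) := by
  have := (tendsto_nat_floor_mul_div_atTop (R := ℝ) (a := (d : ℝ)⁻¹) (by positivity)).comp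
    tendsto_natCast_atTop_atTop
  refine this.congr fun N => ?_
  simp only [Function.comp]
  rw [inv_mul_eq_div, Nat.floor_div_eq_div]

theorem nat_div_le (N d : ℕ) : ((N / d : ℕ) : ℝ) / N ≤ (d : ℝ)⁻¹ := by
  rcases Nat.eq_zero_or_pos N with rfl | hN
  · simp
  rw [div_le_iff₀ (by exact_mod_cast hN), inv_mul_eq_div]
  exact Nat.cast_div_le

open Filter Topology ArithmeticFunction in
theorem IsDF.density {A B : Set ℕ} (h : IsDF A B)
    (hsum : Summable fun a : A => ((a : ℕ) : ℝ)⁻¹) :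
    ∃ κ : ℝ, Tendsto (fun N : ℕ => cntB B N / N) atTop (𝓝 κ) := by
  classical
  obtain ⟨g, hg, hgA⟩ := h.exists_g hsum
  let γ : ArithmeticFunction ℂ := ⟨fun n => n * g n, by simp⟩
  let fa : ArithmeticFunction ℂ := ⟨fun n => if n ∈ A then 1 else 0, by
    rw [if_neg]; exact fun h0 => (h.apos 0 h0).ne rfl⟩
  let fb : ArithmeticFunction ℂ := ⟨fun n => if n ∈ B then 1 else 0, by
    rw [if_neg]; exact fun h0 => (h.bpos 0 h0).ne rfl⟩
  have hγ : ∀ n, γ n = n * g n := fun n => rfl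
  have hfa : ∀ n, fa n = if n ∈ A then 1 else 0 := fun n => rfl
  have hfb : ∀ n, fb n = if n ∈ B then 1 else 0 := fun n => rfl
  have e1 : fa * γ = 1 := by
    ext n
    rcases Nat.eq_zero_or_pos n with rfl | hn
    · simp
    have h1 := (hgA n hn).tsum_eq
    rw [tsum_subtype A (fun a : ℕ => if a ∣ n then (a : ℂ)⁻¹ * g (n / a) else 0),
      tsum_eq_sum (s := n.divisors)] at h1
    · rw [ArithmeticFunction.mul_apply, Nat.sum_divisorsAntidiagonal (f := fun x y => fa x * γ y),
        ArithmeticFunction.one_apply]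
      have h2 : ∑ i ∈ n.divisors, fa i * γ (n / i) = n * (if n = 1 then (1 : ℂ) else 0) := by
        rw [← h1, Finset.mul_sum]
        refine Finset.sum_congr rfl fun a ha => ?_
        have hd := Nat.dvd_of_mem_divisors ha
        have ha0 : (a : ℂ) ≠ 0 := by exact_mod_cast (Nat.pos_of_mem_divisors ha).ne'
        rw [hfa, hγ, Set.indicator_apply, if_pos hd, Nat.cast_div hd ha0]
        split_ifs
        · field_simp
        · simp
      rw [h2]
      split_ifs with hn1
      · simp [hn1]
      · simp
    · intro b hb
      rw [Set.indicator_apply]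
      split_ifs with h3 h4
      · exact absurd (Nat.mem_divisors.2 ⟨h4, hn.ne'⟩) hb
      · rfl
      · rfl
  have e2 : fa * fb = ((ArithmeticFunction.zeta : ArithmeticFunction ℕ) : ArithmeticFunction ℂ) := by
    ext n
    rcases Nat.eq_zero_or_pos n with rfl | hn
    · simp
    obtain ⟨⟨a, b⟩, ⟨ha, hb, e⟩, -⟩ := h.fac n hn
    simp only at ha hb e
    rw [ArithmeticFunction.mul_apply, Finset.sum_eq_single (a, b)]
    · simp [hfa, hfb, ha, hb, hn.ne', natCoe_apply, zeta_apply]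
    · rintro ⟨x, y⟩ hxy hne
      rw [Nat.mem_divisorsAntidiagonal] at hxy
      by_cases hx : x ∈ A
      · by_cases hy : y ∈ B
        · have := h.inj hx hy ha hb (hxy.1.trans e.symm)
          exact absurd (by simp [this.1, this.2]) hne
        · simp [hfb, hy]
      · simp [hfa, hx]
    · intro hab
      exact absurd (Nat.mem_divisorsAntidiagonal.2 ⟨e, hn.ne'⟩) hab
  have e3 : fb = γ * ((ArithmeticFunction.zeta : ArithmeticFunction ℕ) : ArithmeticFunction ℂ) := by
    rw [← e2, ← mul_assoc, mul_comm γ fa, e1, one_mul]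
  have e4 : ∀ N : ℕ, ((cntB B N : ℝ) : ℂ) = ∑ n ∈ Finset.Ioc 0 N, γ n * ((N / n : ℕ) : ℂ) := by
    intro N
    rw [← ArithmeticFunction.sum_Ioc_mul_zeta_eq_sum, ← e3, cntB]
    push_cast
    refine Finset.sum_congr rfl fun n _ => ?_
    rw [hfb]; split_ifs <;> simp
  have e5 : ∀ N : ℕ, (((cntB B N / N : ℝ)) : ℂ) =
      ∑' n : ℕ, g n * ((n * (((N / n : ℕ) : ℝ) / N) : ℝ) : ℂ) := by
    intro N
    push_cast
    rw [e4, tsum_eq_sum (s := Finset.Ioc 0 N), Finset.sum_div]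
    · refine Finset.sum_congr rfl fun n _ => ?_
      rw [hγ]; ring
    · intro n hn
      rw [Finset.mem_Ioc] at hn
      rcases Nat.eq_zero_or_pos n with rfl | hn0
      · simp
      · rw [Nat.div_eq_of_lt (by omega)]; simp
  have lim : Tendsto (fun N : ℕ => (((cntB B N / N : ℝ)) : ℂ)) atTop
      (𝓝 (∑' n : ℕ, g n * ((n * (n : ℝ)⁻¹ : ℝ) : ℂ))) := by
    simp only [e5]
    refine tendsto_tsum_of_dominated_convergence hg (fun n => ?_) (Eventually.of_forall
      fun N n => ?_)
    · refine Tendsto.const_mul _ ?_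
      exact (Complex.continuous_ofReal.tendsto _).comp (nat_div_tendsto.const_mul _)
    · rw [norm_mul, Complex.norm_real, Real.norm_of_nonneg (by positivity)]
      refine mul_le_of_le_one_right (norm_nonneg _) ?_
      calc (n : ℝ) * (((N / n : ℕ) : ℝ) / N) ≤ n * (n : ℝ)⁻¹ := by
            gcongr; exact nat_div_le N n
        _ ≤ 1 := mul_inv_le_one
  refine ⟨_, ((Complex.continuous_re.tendsto _).comp lim).congr fun N => ?_⟩
  simp only [Function.comp, Complex.ofReal_re]

theorem IsDF.sum_eq {A B : Set ℕ} (h : IsDF A B) (f fA : ℕ → ℝ)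
    (hfA : ∀ a ∈ A, ∀ b ∈ B, fA (a * b) = f a) (N : ℕ) :
    ∑ n ∈ Finset.Icc 1 N, fA n = ∑' a : A, f a * cntB B (N / a) := by
  classical
  have e0 : ∀ a : ℕ, 0 < a → cntB B (N / a) =
      ∑ n ∈ Finset.Icc 1 N, if a ∣ n ∧ n / a ∈ B then (1 : ℝ) else 0 := by
    intro a ha
    rw [cntB, ← Finset.sum_filter, ← Finset.sum_filter]
    refine Finset.sum_nbij' (fun b => a * b) (fun n => n / a) ?_ ?_ ?_ ?_ ?_
    · intro b hb
      rw [Finset.mem_filter, Finset.mem_Ioc, Nat.le_div_iff_mul_le ha] at hb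
      rw [Finset.mem_filter, Finset.mem_Icc, Nat.mul_div_cancel_left b ha]
      refine ⟨⟨Nat.mul_pos ha hb.1.1, by rw [mul_comm]; exact hb.1.2⟩, dvd_mul_right _ _, hb.2⟩
    · intro n hn
      rw [Finset.mem_filter, Finset.mem_Icc] at hn
      rw [Finset.mem_filter, Finset.mem_Ioc]
      exact ⟨⟨h.bpos _ hn.2.2, Nat.div_le_div_right hn.1.2⟩, hn.2.2⟩
    · intro b _
      exact Nat.mul_div_cancel_left b ha
    · intro n hn
      rw [Finset.mem_filter] at hn
      exact Nat.mul_div_cancel' hn.2.1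
    · intro b _; rfl
  rw [tsum_subtype A (fun a : ℕ => f a * cntB B (N / a)), tsum_eq_sum (s := Finset.Icc 1 N)]
  · have e1 : ∀ a ∈ Finset.Icc 1 N, A.indicator (fun a : ℕ => f a * cntB B (N / a)) a =
        ∑ n ∈ Finset.Icc 1 N, if a ∈ A ∧ a ∣ n ∧ n / a ∈ B then f a else 0 := by
      intro a ha
      rw [Set.indicator_apply]
      split_ifs with haA
      · rw [e0 a (h.apos a haA), Finset.mul_sum]
        refine Finset.sum_congr rfl fun n _ => ?_
        simp [haA]
      · simp [haA]
    rw [Finset.sum_congr rfl e1, Finset.sum_comm]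
    refine Finset.sum_congr rfl fun n hn => ?_
    rw [Finset.mem_Icc] at hn
    obtain ⟨⟨a, b⟩, ⟨ha, hb, e⟩, -⟩ := h.fac n hn.1
    simp only at ha hb e
    have ha0 := h.apos a ha
    rw [Finset.sum_eq_single a]
    · rw [if_pos, ← e, hfA a ha b hb]
      refine ⟨ha, ⟨b, e.symm⟩, ?_⟩
      rw [← e, Nat.mul_div_cancel_left b ha0]
      exact hb
    · intro a' _ hne
      rw [if_neg]
      rintro ⟨h1, h2, h3⟩
      exact hne (h.inj h1 h3 ha hb ((Nat.mul_div_cancel' h2).trans e.symm)).1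
    · intro hna
      exfalso
      apply hna
      rw [Finset.mem_Icc]
      refine ⟨ha0, le_trans ?_ hn.2⟩
      rw [← e]
      exact Nat.le_mul_of_pos_right a (h.bpos b hb)
  · intro a ha
    rw [Finset.mem_Icc] at ha
    rw [Set.indicator_apply]
    split_ifs with haA
    · have := h.apos a haA
      rw [Nat.div_eq_of_lt (by omega)]
      simp [cntB]
    · rfl

open Filter Topology in
theorem IsDF.mean_aux {A B : Set ℕ} (h : IsDF A B) {κ : ℝ}
    (hκ : Tendsto (fun N : ℕ => cntB B N / N) atTop (𝓝 κ)) (f fA : ℕ → ℝ)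
    (hfA : ∀ a ∈ A, ∀ b ∈ B, fA (a * b) = f a)
    (hs : Summable fun a : A => f a / ((a : ℕ) : ℝ)) :
    Tendsto (fun N : ℕ => (∑ n ∈ Finset.Icc 1 N, fA n) / N) atTop
      (𝓝 (κ * ∑' a : A, f a / ((a : ℕ) : ℝ))) := by
  have e1 : ∀ N : ℕ, (∑ n ∈ Finset.Icc 1 N, fA n) / N =
      ∑' a : A, f a * (cntB B (N / a) / N) := by
    intro N
    rw [h.sum_eq f fA hfA N, ← tsum_div_const]
    exact tsum_congr fun a => by ring
  have e2 : κ * ∑' a : A, f a / ((a : ℕ) : ℝ) = ∑' a : A, f a * (κ * ((a : ℕ) : ℝ)⁻¹) := by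
    rw [← tsum_mul_left]
    exact tsum_congr fun a => by ring
  rw [e2]
  simp only [e1]
  refine tendsto_tsum_of_dominated_convergence hs.norm (fun a => ?_) (Eventually.of_forall
      fun N a => ?_)
  · refine Tendsto.const_mul _ ?_
    have ha : (a : ℕ) ≠ 0 := (h.apos _ a.2).ne'
    refine ((hκ.comp (Nat.tendsto_div_const_atTop ha)).mul
      (nat_div_tendsto (d := a))).congr' ?_
    filter_upwards [eventually_ge_atTop (a : ℕ)] with N hN
    have : 0 < N / a := Nat.div_pos hN (h.apos _ a.2)
    have : (0 : ℝ) < ((N / a : ℕ) : ℝ) := by exact_mod_cast this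
    simp only [Function.comp]
    field_simp
  · rw [norm_mul, norm_div (f a), Real.norm_of_nonneg (div_nonneg (cntB_nonneg _ _)
      (Nat.cast_nonneg _)), Real.norm_of_nonneg (Nat.cast_nonneg (a : ℕ)), div_eq_mul_inv ‖f a‖]
    gcongr
    refine le_trans ?_ (nat_div_le N a)
    gcongr
    exact cntB_le _ _

open Filter Topology in
theorem IsDF.mean_fin {A B : Set ℕ} (h : IsDF A B)
    (hsum : Summable fun a : A => ((a : ℕ) : ℝ)⁻¹) (f fA : ℕ → ℝ)
    (hfA : ∀ a ∈ A, ∀ b ∈ B, fA (a * b) = f a)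
    (hs : Summable fun a : A => f a / ((a : ℕ) : ℝ)) :
    Tendsto (fun N : ℕ => (∑ n ∈ Finset.Icc 1 N, fA n) / N) atTop
      (𝓝 ((∑' a : A, ((a : ℕ) : ℝ)⁻¹)⁻¹ * ∑' a : A, f a / ((a : ℕ) : ℝ))) := by
  obtain ⟨κ, hκ⟩ := h.density hsum
  have h1 := h.mean_aux hκ (fun _ => 1) (fun _ => 1) (fun _ _ _ _ => rfl) (by simpa using hsum)
  have h2 : Tendsto (fun N : ℕ => (∑ n ∈ Finset.Icc 1 N, (1 : ℝ)) / N) atTop (𝓝 1) := by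
    refine tendsto_const_nhds.congr' ?_
    filter_upwards [eventually_gt_atTop 0] with N hN
    have : (N : ℝ) ≠ 0 := by exact_mod_cast hN.ne'
    simp [this]
  have h3 := tendsto_nhds_unique h1 h2
  simp only [one_div] at h3
  rw [← eq_inv_of_mul_eq_one_left h3]
  exact h.mean_aux hκ f fA hfA hs

open Filter Topology in
theorem IsDF.mean_inf {A B : Set ℕ} (h : IsDF A B)
    (hsum : Summable fun a : A => ((a : ℕ) : ℝ)⁻¹) (hpos : 0 < ∑' a : A, ((a : ℕ) : ℝ)⁻¹)
    (f fA : ℕ → ℝ)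
    (hfA : ∀ a ∈ A, ∀ b ∈ B, fA (a * b) = f a) (hf0 : ∀ n, 0 ≤ f n)
    (hs : ¬ Summable fun a : A => f a / ((a : ℕ) : ℝ)) :
    Tendsto (fun N : ℕ => (∑ n ∈ Finset.Icc 1 N, fA n) / N) atTop atTop := by
  classical
  set H := ∑' a : A, ((a : ℕ) : ℝ)⁻¹ with hH
  have hex : ∀ n : ℕ, ∃ a, 0 < n → a ∈ A ∧ ∃ b ∈ B, a * b = n := by
    intro n
    by_cases hn : 0 < n
    · obtain ⟨⟨a, b⟩, ⟨ha, hb, e⟩, -⟩ := h.fac n hn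
      exact ⟨a, fun _ => ⟨ha, b, hb, e⟩⟩
    · exact ⟨0, fun h => absurd h hn⟩
  choose α hα using hex
  have hαab : ∀ a ∈ A, ∀ b ∈ B, α (a * b) = a := by
    intro a ha b hb
    obtain ⟨h1, b', hb', e⟩ := hα (a * b) (Nat.mul_pos (h.apos _ ha) (h.bpos _ hb))
    exact (h.inj h1 hb' ha hb e).1
  rw [tendsto_atTop]
  intro K
  have hu : ∃ u : Finset A, H * (K + 1) < ∑ a ∈ u, f a / ((a : ℕ) : ℝ) := by
    by_contra hcon
    push Not at hcon
    exact hs (summable_of_sum_le (fun a => div_nonneg (hf0 _) (Nat.cast_nonneg _)) hcon)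
  obtain ⟨u, hu⟩ := hu
  let F : ℕ → ℝ := fun a => if ∃ x ∈ u, (x : ℕ) = a then f a else 0
  have hFu : ∀ a : A, F a = if a ∈ u then f a else 0 := by
    intro a
    have : (∃ x ∈ u, (x : ℕ) = a) ↔ a ∈ u := by
      constructor
      · rintro ⟨x, hx, e⟩
        rwa [← Subtype.ext e]
      · intro ha; exact ⟨a, ha, rfl⟩
    simp only [F, this]
  have hz : ∀ a ∉ u, F a / ((a : ℕ) : ℝ) = 0 := by
    intro a ha; rw [hFu, if_neg ha, zero_div]
  have hlim := h.mean_fin hsum F (fun n => F (α n))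
    (fun a ha b hb => by simp only [hαab a ha b hb]) (summable_of_ne_finset_zero hz)
  have hval : ∑' a : A, F a / ((a : ℕ) : ℝ) = ∑ a ∈ u, f a / ((a : ℕ) : ℝ) := by
    rw [tsum_eq_sum hz]
    refine Finset.sum_congr rfl fun a ha => ?_
    rw [hFu, if_pos ha]
  rw [hval] at hlim
  have hgt : K < H⁻¹ * ∑ a ∈ u, f a / ((a : ℕ) : ℝ) := by
    rw [inv_mul_eq_div, lt_div_iff₀ hpos]
    nlinarith
  filter_upwards [hlim.eventually (lt_mem_nhds hgt)] with N hN
  refine hN.le.trans ?_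
  gcongr with n hn
  obtain ⟨ha, b, hb, e⟩ := hα n (Finset.mem_Icc.1 hn).1
  have : fA n = f (α n) := by
    conv_lhs => rw [← e]
    exact hfA _ ha _ hb
  rw [this]
  simp only [F]
  split_ifs
  · exact le_rfl
  · exact hf0 _

open scoped Classical in
/-- Mean value of the `A`-reduction of `f`, for complementary direct factors `A`, `B` of `ℕ+`
(positive integers, represented here by positive naturals): the Cesàro means of `f(·;A)`
converge to `λ ∑_{a ∈ A} f(a)/a`, possibly `+∞`. -/
theorem stmt12 (A B : Set ℕ) (hApos : ∀ a ∈ A, 0 < a) (hBpos : ∀ b ∈ B, 0 < b)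
    (hfac : ∀ n : ℕ, 0 < n → ∃! p : ℕ × ℕ, p.1 ∈ A ∧ p.2 ∈ B ∧ p.1 * p.2 = n)
    (lam : ℝ) (hsum : Summable fun a : A => 1 / ((a : ℕ) : ℝ))
    (hlam : lam = (∑' a : A, 1 / ((a : ℕ) : ℝ))⁻¹) (hlam0 : 0 < lam) (hlam1 : lam ≤ 1)
    (f fA : ℕ → ℝ)
    (hmin : Summable fun a : A => min (f a) 0 / ((a : ℕ) : ℝ))
    (hfA : ∀ a ∈ A, ∀ b ∈ B, fA (a * b) = f a) :
    Filter.Tendsto (fun t : ℝ => (∑ n ∈ Finset.Icc 1 ⌊t⌋₊, fA n) / t) Filter.atTop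
      (if Summable (fun a : A => f a / ((a : ℕ) : ℝ)) then
        nhds (lam * ∑' a : A, f a / ((a : ℕ) : ℝ))
      else Filter.atTop) := by
  have h : IsDF A B := ⟨hApos, hBpos, hfac⟩
  have hsum' : Summable fun a : A => ((a : ℕ) : ℝ)⁻¹ := by simpa only [one_div] using hsum
  simp only [one_div] at hlam
  have hpos : 0 < ∑' a : A, ((a : ℕ) : ℝ)⁻¹ := by
    rw [hlam] at hlam0
    exact inv_pos.1 hlam0
  have hfl := tendsto_nat_floor_div_atTop (R := ℝ)
  have hcongr : (fun t : ℝ => (∑ n ∈ Finset.Icc 1 ⌊t⌋₊, fA n) / (⌊t⌋₊ : ℝ) * ((⌊t⌋₊ : ℝ) / t))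
      =ᶠ[Filter.atTop] (fun t : ℝ => (∑ n ∈ Finset.Icc 1 ⌊t⌋₊, fA n) / t) := by
    filter_upwards [Filter.eventually_ge_atTop (1 : ℝ)] with t ht
    have h1 : (0 : ℝ) < ⌊t⌋₊ := by exact_mod_cast Nat.floor_pos.2 ht
    field_simp
  split_ifs with hs
  · have h1 := (h.mean_fin hsum' f fA hfA hs).comp (tendsto_nat_floor_atTop (α := ℝ))
    have h2 := h1.mul hfl
    rw [mul_one, ← hlam] at h2
    exact h2.congr' hcongr
  · have hm := h.mean_fin hsum' (fun n => min (f n) 0) (fun n => min (fA n) 0)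
      (fun a ha b hb => by simp only [hfA a ha b hb]) hmin
    have hp := h.mean_inf hsum' hpos (fun n => max (f n) 0) (fun n => max (fA n) 0)
      (fun a ha b hb => by simp only [hfA a ha b hb]) (fun n => le_max_right _ _) (by
        intro hs2
        refine hs ((hs2.add hmin).congr fun a => ?_)
        rw [← add_div, max_add_min, add_zero])
    have h0 : Filter.Tendsto (fun N : ℕ => (∑ n ∈ Finset.Icc 1 N, fA n) / N) Filter.atTop
        Filter.atTop := by
      refine (hp.atTop_add hm).congr fun N => ?_
      rw [← add_div, ← Finset.sum_add_distrib]
      simp only [max_add_min, add_zero]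
    have h1 := h0.comp (tendsto_nat_floor_atTop (α := ℝ))
    exact (h1.atTop_mul_pos one_pos hfl).congr' hcongr
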